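/- Let f ∈ ℂ[x_0,…,x_n]_d be homogeneous of degree d with V(f) not a cone, let 1 < k < d−1, and suppose the Hessian determinant hess_f = det(∂²f/∂x_i∂x_j)_{0≤i,j≤n} is not identically zero. Then there exist n+1 algebraically independent elements over ℂ among the k-th order partial derivatives {∂^α f : |α| = k}; equivalently, the k-th polar map of V(f) is not degenerate (its image has dimension n). -/

import Mathlib

/-!
Let `K` be the fraction field of `R[x_0,…,x_n]`, for a domain `R` of characteristic zero, and let
`S_k ⊆ K^{n+1}` be the span of the gradients of the `k`-th order partial derivatives of `f`. Such a
derivative `p` is homogeneous of degree `d - k`, and Euler's identity for the `∂_i p` reads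
`∑_j x_j ∇(∂_j p) = (d - k - 1) ∇p`. So `∇p ∈ S_{k+1}` as long as `k + 1 < d`, which gives
`S_1 ⊆ S_2 ⊆ ⋯ ⊆ S_{d-1}`. The columns of the Hessian matrix lie in `S_1`, hence a nonzero Hessian
determinant forces `S_k = K^{n+1}` for `1 ≤ k ≤ d - 1`. By the Jacobian criterion, `n + 1`
derivatives of order `k` whose gradients form a basis of `K^{n+1}` are algebraically independent.
-/

open MvPolynomial Module

/-- The differential operator `∂^α` on `ℂ[x_0,…,x_{N-1}]` given by a multi-index
`α : Fin N → ℕ`. -/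
noncomputable def pd {N : ℕ} (α : Fin N → ℕ) :
    Module.End ℂ (MvPolynomial (Fin N) ℂ) :=
  (List.ofFn fun i =>
    ((MvPolynomial.pderiv (R := ℂ) i).toLinearMap :
      Module.End ℂ (MvPolynomial (Fin N) ℂ)) ^ (α i)).prod

/-- The Hessian determinant `det (∂²f/∂x_i∂x_j)` of a polynomial. -/
noncomputable def hessDet {N : ℕ} (f : MvPolynomial (Fin N) ℂ) :
    MvPolynomial (Fin N) ℂ :=
  Matrix.det (Matrix.of fun i j => pderiv i (pderiv j f))

section JacobianCriterion

variable {R A M ι : Type*}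

theorem eq_C_of_pderiv_eq_zero [CommRing R] [IsAddTorsionFree R] {P : MvPolynomial ι R}
    (hP : ∀ i, pderiv i P = 0) : P = C (coeff 0 P) := by
  refine MvPolynomial.coe_injective _ _ (MvPowerSeries.pderiv.ext (fun i => ?_) ?_)
  · simp [MvPowerSeries.pderiv_coe, hP]
  · simp only [← MvPowerSeries.coeff_zero_eq_constantCoeff_apply, coeff_coe, coeff_zero_C]

theorem totalDegree_pderiv_lt [CommSemiring R] {P : MvPolynomial ι R} {i : ι}
    (hP : pderiv i P ≠ 0) : (pderiv i P).totalDegree < P.totalDegree := by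
  obtain ⟨m, hm, hdeg⟩ := Finset.exists_mem_eq_sup (pderiv i P).support (support_nonempty.mpr hP)
    fun s => s.sum fun _ e => e
  rw [MvPolynomial.mem_support_iff, coeff_pderiv] at hm
  calc (pderiv i P).totalDegree = m.sum fun _ e => e := hdeg
    _ < (m + Finsupp.single i 1).sum fun _ e => e := by
      classical
      rw [Finsupp.sum_add_index' (by simp) (by simp), Finsupp.sum_single_index rfl]
      exact Nat.lt_succ_self _
    _ ≤ P.totalDegree := le_totalDegree (MvPolynomial.mem_support_iff.mpr (left_ne_zero_of_mul hm))

theorem derivation_aeval [CommSemiring R] [CommSemiring A] [Algebra R A] [AddCommMonoid M]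
    [Module A M] [Module R M] [Fintype ι] (D : Derivation R A M) (v : ι → A)
    (P : MvPolynomial ι R) :
    D (aeval v P) = ∑ i, aeval v (pderiv i P) • D (v i) := by
  classical
  induction P using MvPolynomial.induction_on with
  | C a => simp
  | add p q hp hq => simp only [map_add, hp, hq, add_smul, Finset.sum_add_distrib]
  | mul_X p i hp =>
    simp [hp, Derivation.leibniz, pderiv_X, Pi.single_apply, add_smul, mul_smul, apply_ite,
      ite_smul, Finset.sum_add_distrib, Finset.smul_sum]

/-- If `P(v) = 0`, then `∑ i, (∂_i P)(v) • D (v i) = 0` by the chain rule, so the `(∂_i P)(v)`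
vanish and each `∂_i P` is a relation of smaller degree. -/
theorem algebraicIndependent_of_linearIndependent_derivation [CommRing R] [IsAddTorsionFree R]
    [CommRing A] [Algebra R A] [FaithfulSMul R A] [AddCommGroup M] [Module A M] [Module R M]
    (D : Derivation R A M) {v : ι → A} (hv : LinearIndependent A fun i => D (v i)) :
    AlgebraicIndependent R v := by
  refine algebraicIndependent_of_finite_type fun t ht => ?_
  have := ht.fintype
  replace hv := hv.comp ((↑) : t → ι) Subtype.val_injective
  rw [algebraicIndependent_iff]
  intro P hP
  induction hd : P.totalDegree using Nat.strong_induction_on generalizing P with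
  | _ d ih =>
  have hP' : ∀ i, aeval (fun i : t => v i) (pderiv i P) = 0 :=
    Fintype.linearIndependent_iff.mp hv _ <| by
      simpa [hP] using (derivation_aeval D (fun i : t => v i) P).symm
  have hconst : P = C (coeff 0 P) := eq_C_of_pderiv_eq_zero fun i => by
    by_contra hne
    exact hne (ih _ (hd ▸ totalDegree_pderiv_lt hne) _ (hP' i) rfl)
  rw [hconst] at hP ⊢
  simpa using hP

end JacobianCriterion

section PartialDerivatives

variable {R σ : Type*} [CommSemiring R]

/-- The set of `k`-th order partial derivatives `∂_{i_1} ⋯ ∂_{i_k} f` of a polynomial. The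
order of the differentiations is left free, whereas `pd` fixes it. -/
def partialDerivs (f : MvPolynomial σ R) : ℕ → Set (MvPolynomial σ R)
  | 0 => {f}
  | k + 1 => {q | ∃ p ∈ partialDerivs f k, ∃ i, pderiv i p = q}

theorem isHomogeneous_of_mem_partialDerivs {f p : MvPolynomial σ R} {d k : ℕ}
    (hf : f.IsHomogeneous d) (hp : p ∈ partialDerivs f k) : p.IsHomogeneous (d - k) := by
  induction k generalizing p with
  | zero => exact Set.mem_singleton_iff.mp hp ▸ hf
  | succ k ih =>
    obtain ⟨q, hq, i, rfl⟩ := hp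
    exact (ih hq).pderiv

/-- The matrix `(∂²f/∂x_i∂x_j)` of second order partial derivatives of a polynomial. -/
noncomputable def hessianMatrix (f : MvPolynomial σ R) : Matrix σ σ (MvPolynomial σ R) :=
  Matrix.of fun i j => pderiv i (pderiv j f)

end PartialDerivatives

section Gradient

variable {R σ : Type*} [CommRing R]

/-- The gradient of a polynomial. It takes values in the vectors of rational functions, so that
gradients span vector spaces. -/
noncomputable def polyGradient :
    Derivation R (MvPolynomial σ R) (σ → FractionRing (MvPolynomial σ R)) :=
  Derivation.mk' (LinearMap.pi fun i => ((Algebra.linearMap _ _).compDer (pderiv i)).toLinearMap)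
    fun p q => by ext i; simp [Algebra.smul_def]

theorem polyGradient_apply (p : MvPolynomial σ R) (i : σ) :
    polyGradient p i = algebraMap _ (FractionRing (MvPolynomial σ R)) (pderiv i p) := rfl

theorem pderiv_pderiv_comm (i j : σ) (p : MvPolynomial σ R) :
    pderiv i (pderiv j p) = pderiv j (pderiv i p) := by
  classical
  have hbracket : ⁅pderiv (R := R) i, pderiv j⁆ = 0 := derivation_ext fun l => by
    rw [Derivation.commutator_apply]
    simp [pderiv_X, Pi.single_apply, apply_ite]
  exact sub_eq_zero.mp (DFunLike.congr_fun hbracket p)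

theorem sum_X_smul_polyGradient_pderiv [Fintype σ] {p : MvPolynomial σ R} {d : ℕ}
    (hp : p.IsHomogeneous d) :
    ∑ j, (X j : MvPolynomial σ R) • polyGradient (pderiv j p) = (d - 1) • polyGradient p := by
  funext i
  have heuler : ∑ j, X j * pderiv i (pderiv j p) = (d - 1) • pderiv i p := by
    simpa only [pderiv_pderiv_comm i] using hp.pderiv.sum_X_mul_pderiv
  simpa [polyGradient_apply, Algebra.smul_def] using
    congrArg (algebraMap _ (FractionRing (MvPolynomial σ R))) heuler

variable [IsDomain R]

theorem linearIndependent_polyGradient_pderiv [Fintype σ] [DecidableEq σ] {f : MvPolynomial σ R}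
    (hhess : (hessianMatrix f).det ≠ 0) :
    LinearIndependent (FractionRing (MvPolynomial σ R)) fun i => polyGradient (pderiv i f) := by
  have hdet : ((hessianMatrix f).map (algebraMap _ (FractionRing (MvPolynomial σ R)))).det ≠ 0 := by
    rwa [← RingHom.mapMatrix_apply, ← RingHom.map_det,
      map_ne_zero_iff _ (IsFractionRing.injective _ _)]
  exact Matrix.linearIndependent_cols_of_det_ne_zero hdet

variable [CharZero R]

theorem polyGradient_mem_span_pderiv [Finite σ] {p : MvPolynomial σ R} {d : ℕ}
    (hp : p.IsHomogeneous d) (hd : 1 < d) :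
    polyGradient p ∈ Submodule.span (FractionRing (MvPolynomial σ R))
      (Set.range fun j => polyGradient (pderiv j p)) := by
  have := Fintype.ofFinite σ
  have hne : ((d - 1 : ℕ) : FractionRing (MvPolynomial σ R)) ≠ 0 :=
    Nat.cast_ne_zero.mpr (Nat.sub_ne_zero_of_lt hd)
  rw [← Submodule.smul_mem_iff _ hne, Nat.cast_smul_eq_nsmul, ← sum_X_smul_polyGradient_pderiv hp]
  exact Submodule.sum_mem _ fun j _ =>
    Submodule.smul_of_tower_mem _ _ (Submodule.subset_span (Set.mem_range_self j))

theorem span_polyGradient_partialDerivs_le_succ [Finite σ] {f : MvPolynomial σ R} {d k : ℕ}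
    (hf : f.IsHomogeneous d) (hk : k + 1 < d) :
    Submodule.span (FractionRing (MvPolynomial σ R)) (polyGradient '' partialDerivs f k) ≤
      Submodule.span (FractionRing (MvPolynomial σ R))
        (polyGradient '' partialDerivs f (k + 1)) := by
  rw [Submodule.span_le]
  rintro _ ⟨p, hp, rfl⟩
  refine Submodule.span_mono ?_ (polyGradient_mem_span_pderiv
    (isHomogeneous_of_mem_partialDerivs hf hp) (by lia))
  rintro _ ⟨j, rfl⟩
  exact ⟨_, ⟨p, hp, j, rfl⟩, rfl⟩

theorem span_polyGradient_partialDerivs_eq_top [Fintype σ] [DecidableEq σ] {f : MvPolynomial σ R}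
    {d k : ℕ} (hf : f.IsHomogeneous d) (hhess : (hessianMatrix f).det ≠ 0) (hk : 1 ≤ k)
    (hkd : k < d) :
    Submodule.span (FractionRing (MvPolynomial σ R)) (polyGradient '' partialDerivs f k) = ⊤ := by
  induction k, hk using Nat.le_induction with
  | base =>
    rw [eq_top_iff, ← (linearIndependent_polyGradient_pderiv hhess).span_eq_top_of_card_eq_finrank'
      (Module.finrank_fintype_fun_eq_card _).symm]
    refine Submodule.span_mono ?_
    rintro _ ⟨i, rfl⟩
    exact ⟨_, ⟨f, rfl, i, rfl⟩, rfl⟩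
  | succ k _ ih =>
    exact eq_top_iff.mpr (ih (by lia) ▸ span_polyGradient_partialDerivs_le_succ hf hkd)

end Gradient

theorem exists_basis_forall_mem_of_span_eq_top {K V ι : Type*} [Field K] [AddCommGroup V]
    [Module K V] (b : Basis ι K V) {s : Set V} (hs : Submodule.span K s = ⊤) :
    ∃ c : Basis ι K V, ∀ i, c i ∈ s := by
  let c := Basis.ofSpan hs.ge
  refine ⟨c.reindex (c.indexEquiv b), fun i => ?_⟩
  rw [Basis.reindex_apply]
  exact Basis.ofSpan_subset hs.ge (Set.mem_range_self _)

theorem nondegenerate_higher_polar_of_hessian_ne_zero_general {R σ : Type*} [CommRing R]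
    [IsDomain R] [CharZero R] [Fintype σ] [DecidableEq σ] {f : MvPolynomial σ R} {d k : ℕ}
    (hf : f.IsHomogeneous d) (hhess : (hessianMatrix f).det ≠ 0) (hk : 1 ≤ k) (hkd : k < d) :
    ∃ g : σ → MvPolynomial σ R, (∀ i, g i ∈ partialDerivs f k) ∧ AlgebraicIndependent R g := by
  obtain ⟨c, hc⟩ := exists_basis_forall_mem_of_span_eq_top
    (Pi.basisFun (FractionRing (MvPolynomial σ R)) σ)
    (span_polyGradient_partialDerivs_eq_top hf hhess hk hkd)
  choose g hg hgc using hc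
  refine ⟨g, hg, algebraicIndependent_of_linearIndependent_derivation polyGradient ?_⟩
  rw [LinearIndependent.iff_fractionRing _ (FractionRing (MvPolynomial σ R)), funext hgc]
  exact c.linearIndependent

section MultiIndex

theorem prod_ofFn_pow_add_single {M : Type*} [Monoid M] {N : ℕ} (a : Fin N → M) (α : Fin N → ℕ)
    (j : Fin N) (ha : ∀ i, Commute (a j) (a i)) :
    (List.ofFn fun i => a i ^ (α + Pi.single j 1 : Fin N → ℕ) i).prod =
      a j * (List.ofFn fun i => a i ^ α i).prod := by
  induction N with
  | zero => exact j.elim0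
  | succ N ih =>
    cases j using Fin.cases with
    | zero => simp [List.ofFn_succ, pow_succ', mul_assoc]
    | succ j =>
      have htail := ih (fun i => a i.succ) (fun i => α i.succ) j fun i => ha i.succ
      simp only [Pi.add_apply, Pi.single_apply] at htail
      simp [List.ofFn_succ, Pi.single_apply, htail, (Fin.succ_ne_zero j).symm,
        ((ha 0).pow_right (α 0)).left_comm]

variable {N : ℕ}

theorem pd_zero (p : MvPolynomial (Fin N) ℂ) : pd 0 p = p := by
  simp [pd]

theorem pd_add_single (α : Fin N → ℕ) (j : Fin N) (p : MvPolynomial (Fin N) ℂ) :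
    pd (α + Pi.single j 1) p = pderiv j (pd α p) := by
  rw [pd, prod_ofFn_pow_add_single _ _ _ fun i => LinearMap.ext (pderiv_pderiv_comm j i)]
  rfl

theorem exists_eq_pd_of_mem_partialDerivs {f p : MvPolynomial (Fin N) ℂ} {k : ℕ}
    (hp : p ∈ partialDerivs f k) : ∃ α : Fin N → ℕ, ∑ t, α t = k ∧ p = pd α f := by
  induction k generalizing p with
  | zero => exact ⟨0, by simp, (Set.mem_singleton_iff.mp hp).trans (pd_zero f).symm⟩
  | succ k ih =>
    obtain ⟨q, hq, j, rfl⟩ := hp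
    obtain ⟨α, rfl, rfl⟩ := ih hq
    exact ⟨α + Pi.single j 1, by simp [Finset.sum_add_distrib], (pd_add_single α j f).symm⟩

end MultiIndex

/-- **Corollary.** Let `f` be homogeneous of degree `d`, not a cone (equivalently, its
first order partial derivatives are linearly independent over `ℂ`), let `1 < k < d−1`,
and suppose `hess_f ≠ 0`.  Then there are `n+1` algebraically independent elements over
`ℂ` among the `k`-th order partial derivatives of `f`; equivalently, the `k`-th polar
map of `V(f)` is not degenerate. -/
theorem nondegenerate_higher_polar_of_hessian_ne_zero
    {n d k : ℕ} (f : MvPolynomial (Fin (n + 1)) ℂ) (hf : f.IsHomogeneous d)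
    (hcone : LinearIndependent ℂ (fun i : Fin (n + 1) => pderiv i f))
    (hk1 : 1 < k) (hk2 : k + 1 < d)
    (hhess : hessDet f ≠ 0) :
    ∃ g : Fin (n + 1) → MvPolynomial (Fin (n + 1)) ℂ,
      (∀ i, ∃ α : Fin (n + 1) → ℕ, (∑ t, α t) = k ∧ g i = pd α f) ∧
      AlgebraicIndependent ℂ g := by
  obtain ⟨g, hg, hind⟩ :=
    nondegenerate_higher_polar_of_hessian_ne_zero_general hf hhess hk1.le (Nat.lt_of_succ_lt hk2)
  exact ⟨g, fun i => exists_eq_pd_of_mem_partialDerivs (hg i), hind⟩
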